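/- arXiv:2103.00167 — 5 statements merged into one kernel-verified Lean document; each statement's English description precedes it below -/
import Mathlib

section
/- Let L be a finite, time-complete, monotone multi-entity event log. For all events e1, e2 ∈ E: e1 ⋖ e2 holds if and only if there exist an entity type et ∈ ET and an identifier id with ent et e1 = some id such that e1 and e2 occur at consecutive positions (e1 immediately followed by e2) in the trace σ_et^id of case id for entity type et. -/
/-- Event `e1` precedes `e2` in entity `id` of type `et`. -/
def precIn {E ET ID : Type*} (time : E → ℝ) (ent : ET → E → Option ID)
    (et : ET) (id : ID) (e1 e2 : E) : Prop :=
  time e1 < time e2 ∧ ent et e1 = some id ∧ ent et e2 = some id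

/-- Event `e1` directly precedes `e2` in entity `id` of type `et`. -/
def dprecIn {E ET ID : Type*} (time : E → ℝ) (ent : ET → E → Option ID)
    (et : ET) (id : ID) (e1 e2 : E) : Prop :=
  precIn time ent et id e1 e2 ∧
    ¬ ∃ e' : E, precIn time ent et id e1 e' ∧ precIn time ent et id e' e2

/-- Event `e1` directly precedes `e2` (for some entity type and identifier). -/
def dprec {E ET ID : Type*} (time : E → ℝ) (ent : ET → E → Option ID)
    (e1 e2 : E) : Prop :=
  ∃ (et : ET) (id : ID), dprecIn time ent et id e1 e2

/-- The log given by `time` and `ent` is monotone: distinct events correlated to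
the same entity of the same type have distinct timestamps. -/
def LogMonotone {E ET ID : Type*} (time : E → ℝ) (ent : ET → E → Option ID) : Prop :=
  ∀ (et : ET) (id : ID) (e1 e2 : E), e1 ≠ e2 →
    ent et e1 = some id → ent et e2 = some id → time e1 ≠ time e2

/-- `σ` is a trace of case `id` for entity type `et`: a duplicate-free list
containing exactly the events correlated to `id` for `et`, sorted by
non-decreasing time. -/
def IsTrace {E ET ID : Type*} (time : E → ℝ) (ent : ET → E → Option ID)
    (et : ET) (id : ID) (σ : List E) : Prop :=
  σ.Nodup ∧ (∀ e : E, e ∈ σ ↔ ent et e = some id) ∧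
    σ.Pairwise (fun a b => time a ≤ time b)

/-- `e1` is immediately followed by `e2` in the list `σ`. -/
def ConsecIn {E : Type*} (σ : List E) (e1 e2 : E) : Prop :=
  ∃ l1 l2 : List E, σ = l1 ++ e1 :: e2 :: l2

/-- In a finite, time-complete, monotone multi-entity event log,
`e1 ⋖ e2` holds iff there are an entity type `et` and identifier `id` with
`ent et e1 = some id` such that `e1` is immediately followed by `e2` in the
trace of case `id` for entity type `et`. -/
theorem dprec_iff_consecutive_in_trace {E ET ID : Type*} [Fintype E] [Fintype ET]
    (time : E → ℝ) (ent : ET → E → Option ID)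
    (hmono : LogMonotone time ent) (e1 e2 : E) :
    dprec time ent e1 e2 ↔
      ∃ (et : ET) (id : ID) (σ : List E),
        ent et e1 = some id ∧ IsTrace time ent et id σ ∧ ConsecIn σ e1 e2 := by
  constructor
  · rintro ⟨et, id, ⟨hlt, h1, h2⟩, hno⟩
    obtain ⟨σ, hσ⟩ : ∃ σ : List E, IsTrace time ent et id σ := by
      classical
      let r : E → E → Prop := fun a b => time a ≤ time b
      haveI : Std.Total r := ⟨fun a b => le_total (time a) (time b)⟩
      haveI : IsTrans E r := ⟨fun a b c h h' => le_trans (α := ℝ) h h'⟩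
      let l := (Finset.univ.filter (fun e => ent et e = some id)).toList
      refine ⟨l.insertionSort r, ?_, ?_, ?_⟩
      · exact (List.perm_insertionSort r l).nodup_iff.2 (Finset.nodup_toList _)
      · intro e
        rw [(List.perm_insertionSort r l).mem_iff]
        simp [l]
      · exact List.pairwise_insertionSort r l
    refine ⟨et, id, σ, h1, hσ, ?_⟩
    obtain ⟨hnd, hmem, hs⟩ := hσ
    obtain ⟨l1, l, rfl⟩ := List.append_of_mem ((hmem e1).2 h1)
    have hm2 := (hmem e2).2 h2
    rw [List.pairwise_append] at hs
    obtain ⟨-, hs2, hs3⟩ := hs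
    have hnd2 := (List.nodup_append.1 hnd).2.1
    rw [List.pairwise_cons] at hs2
    rw [List.nodup_cons] at hnd2
    have hl : e2 ∈ l := by
      rcases List.mem_append.1 hm2 with h | h
      · exact absurd (hs3 e2 h e1 (by simp)) (not_le.2 hlt)
      · rcases List.mem_cons.1 h with h | h
        · subst h; exact absurd hlt (lt_irrefl _)
        · exact h
    cases l with
    | nil => simp at hl
    | cons x l' =>
      by_cases hx : e2 = x
      · subst hx; exact ⟨l1, l', rfl⟩
      · exfalso
        have hl' : e2 ∈ l' := (List.mem_cons.1 hl).resolve_left hx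
        have hxid := (hmem x).1 (by simp)
        have hne : e1 ≠ x := fun h => hnd2.1 (by simp [h])
        have ha := hs2.1 x (by simp)
        have hb := (List.pairwise_cons.1 hs2.2).1 e2 hl'
        exact hno ⟨x, ⟨lt_of_le_of_ne ha (hmono et id e1 x hne h1 hxid), h1, hxid⟩,
          ⟨lt_of_le_of_ne hb (hmono et id x e2 (Ne.symm hx) hxid h2), hxid, h2⟩⟩
  · rintro ⟨et, id, σ, h1, ⟨hnd, hmem, hs⟩, l1, l2, rfl⟩
    have h2 := (hmem e2).1 (by simp)
    have hnd2 := (List.nodup_append.1 hnd).2.1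
    have hne : e1 ≠ e2 := fun h => (List.nodup_cons.1 hnd2).1 (by simp [h])
    obtain ⟨-, hs2, hs3⟩ := List.pairwise_append.1 hs
    have hs4 := List.pairwise_cons.1 hs2
    have hs5 := List.pairwise_cons.1 hs4.2
    refine ⟨et, id, ⟨lt_of_le_of_ne (hs4.1 e2 (by simp)) (hmono et id e1 e2 hne h1 h2), h1, h2⟩, ?_⟩
    rintro ⟨x, ⟨ha, -, hx⟩, ⟨hb, -, -⟩⟩
    rcases List.mem_append.1 ((hmem x).2 hx) with h | h
    · exact absurd (hs3 x h e1 (by simp)) (not_le.2 ha)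
    · rcases List.mem_cons.1 h with h | h
      · subst h; exact lt_irrefl _ ha
      · rcases List.mem_cons.1 h with h | h
        · subst h; exact lt_irrefl _ hb
        · exact absurd (hs5.1 x h) (not_le.2 hb)
end

section
/- Let L be a finite, time-complete, monotone multi-entity event log, let et ∈ ET and let id be an identifier. Then for all events e1, e2 with ent et e1 = some id = ent et e2: time e1 < time e2 holds if and only if (e1, e2) is in the transitive closure of the direct-precedence relation ⋖_et^id. In particular, the transitive closure of ⋖_et^id equals the relation <_et^id on the correlation set corr(et,id), and it is a strict total order on corr(et,id). -/
theorem precIn_transGen_aux {E ET ID : Type*} [Fintype E]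
    (time : E → ℝ) (ent : ET → E → Option ID) (et : ET) (id : ID) :
    ∀ (n : ℕ) (e1 e2 : E),
      {e : E | time e1 < time e ∧ time e < time e2}.ncard = n →
      precIn time ent et id e1 e2 → Relation.TransGen (dprecIn time ent et id) e1 e2 := by
  intro n
  induction n using Nat.strong_induction_on with
  | _ n ih =>
    intro e1 e2 hn h
    by_cases hd : ∃ e' : E, precIn time ent et id e1 e' ∧ precIn time ent et id e' e2
    · obtain ⟨e, h1, h2⟩ := hd
      have a := h1.1
      have b := h2.1
      refine Relation.TransGen.trans (ih _ ?_ e1 e rfl h1) (ih _ ?_ e e2 rfl h2)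
      · rw [← hn]
        refine Set.ncard_lt_ncard ⟨fun x hx => ⟨hx.1, hx.2.trans b⟩, fun hs => ?_⟩ (Set.toFinite _)
        exact lt_irrefl _ (hs (show e ∈ _ from ⟨a, b⟩)).2
      · rw [← hn]
        refine Set.ncard_lt_ncard ⟨fun x hx => ⟨a.trans hx.1, hx.2⟩, fun hs => ?_⟩ (Set.toFinite _)
        exact lt_irrefl _ (hs (show e ∈ _ from ⟨a, b⟩)).1
    · exact Relation.TransGen.single ⟨h, hd⟩

/-- In a finite, time-complete, monotone multi-entity event log,
for events correlated to entity `id` of type `et`, `time e1 < time e2` holds iff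
`(e1, e2)` is in the transitive closure of `⋖_et^id`; this transitive closure
equals `<_et^id` on the correlation set, and it is a strict total order there. -/
theorem transGen_dprecIn_eq_precIn_and_strict_total_order
    {E ET ID : Type*} [Fintype E] [Fintype ET]
    (time : E → ℝ) (ent : ET → E → Option ID)
    (hmono : LogMonotone time ent) (et : ET) (id : ID) :
    (∀ e1 e2 : E, ent et e1 = some id → ent et e2 = some id →
      (time e1 < time e2 ↔ Relation.TransGen (dprecIn time ent et id) e1 e2)) ∧
    (∀ e1 e2 : E,
      Relation.TransGen (dprecIn time ent et id) e1 e2 ↔ precIn time ent et id e1 e2) ∧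
    Transitive (Relation.TransGen (dprecIn time ent et id)) ∧
    Irreflexive (Relation.TransGen (dprecIn time ent et id)) ∧
    (∀ e1 e2 : E, ent et e1 = some id → ent et e2 = some id → e1 ≠ e2 →
      Relation.TransGen (dprecIn time ent et id) e1 e2 ∨
      Relation.TransGen (dprecIn time ent et id) e2 e1) := by
  have key : ∀ e1 e2 : E,
      Relation.TransGen (dprecIn time ent et id) e1 e2 ↔ precIn time ent et id e1 e2 := by
    intro e1 e2
    refine ⟨fun h => ?_, fun h => precIn_transGen_aux time ent et id _ e1 e2 rfl h⟩
    induction h with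
    | single h => exact h.1
    | tail _ h ih => exact ⟨ih.1.trans h.1.1, ih.2.1, h.1.2.2⟩
  refine ⟨fun e1 e2 h1 h2 => ⟨fun h => (key _ _).2 ⟨h, h1, h2⟩, fun h => ((key _ _).1 h).1⟩, key,
    fun _ _ _ h1 h2 => Relation.TransGen.trans h1 h2,
    fun e h => lt_irrefl _ ((key e e).1 h).1, fun e1 e2 h1 h2 hne => ?_⟩
  rcases lt_or_gt_of_ne (hmono et id e1 e2 hne h1 h2) with h | h
  · exact Or.inl ((key _ _).2 ⟨h, h1, h2⟩)
  · exact Or.inr ((key _ _).2 ⟨h, h2, h1⟩)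
end

section
/- Let L be a finite, time-complete, monotone multi-entity event log with entity types ET containing a designated type pid, let E' ⊆ E be a subset of events each having a defined pid value, and let L' be the pid-restriction of L to E' with precedes relation <'. Then for all e1, e2 ∈ E': e1 <' e2 (in L') implies e1 < e2 (in L). -/
theorem transGen_of_precIn {E ET ID : Type*} [Fintype E]
    (time : E → ℝ) (ent : ET → E → Option ID) (et : ET) (id : ID) :
    ∀ (n : ℕ) (a b : E),
      (Finset.univ.filter (fun e => time a < time e ∧ time e < time b)).card ≤ n →
      precIn time ent et id a b → Relation.TransGen (dprec time ent) a b := by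
  classical
  intro n
  induction n with
  | zero =>
    intro a b hn h
    refine Relation.TransGen.single ⟨et, id, h, ?_⟩
    rintro ⟨c, hac, hcb⟩
    have hc : c ∈ Finset.univ.filter (fun e => time a < time e ∧ time e < time b) := by
      simp [hac.1, hcb.1]
    have := Finset.card_pos.mpr ⟨c, hc⟩
    omega
  | succ n ih =>
    intro a b hn h
    by_cases hd : ∃ c, precIn time ent et id a c ∧ precIn time ent et id c b
    · obtain ⟨c, hac, hcb⟩ := hd
      have hc : c ∈ Finset.univ.filter (fun e => time a < time e ∧ time e < time b) := by
        simp [hac.1, hcb.1]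
      refine (ih a c ?_ hac).trans (ih c b ?_ hcb)
      · refine Nat.le_of_lt_succ (lt_of_lt_of_le (Finset.card_lt_card ?_) hn)
        refine (Finset.ssubset_iff_of_subset ?_).mpr ⟨c, hc, by simp⟩
        intro e he
        simp only [Finset.mem_filter, Finset.mem_univ, true_and] at he ⊢
        exact ⟨he.1, he.2.trans hcb.1⟩
      · refine Nat.le_of_lt_succ (lt_of_lt_of_le (Finset.card_lt_card ?_) hn)
        refine (Finset.ssubset_iff_of_subset ?_).mpr ⟨c, hc, by simp⟩
        intro e he
        simp only [Finset.mem_filter, Finset.mem_univ, true_and] at he ⊢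
        exact ⟨hac.1.trans he.1, he.2⟩
    · exact Relation.TransGen.single ⟨et, id, h, hd⟩

/-- Let `L` be a finite, time-complete, monotone multi-entity event
log with a designated entity type `pid`, and let `E'` be a subset of events each
having a defined `pid` value. Orderings in the pid-restriction `L'` of `L` to `E'`
(whose only entity type is `pid`, with direct precedence computed within `E'`)
are preserved in `L`: `e1 <' e2` implies `e1 < e2`. -/
theorem restriction_precedes_implies_precedes
    {E ET ID : Type*} [Fintype E] [Fintype ET]
    (time : E → ℝ) (ent : ET → E → Option ID) (pid : ET)
    (hmono : LogMonotone time ent)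
    (E' : Set E) (hpid : ∀ e ∈ E', (ent pid e).isSome) :
    ∀ e1 e2 : E',
      Relation.TransGen
        (dprec (fun e : E' => time e.val)
          (fun (_ : Unit) (e : E') => ent pid e.val)) e1 e2 →
      Relation.TransGen (dprec time ent) e1.val e2.val := by
  intro e1 e2 h
  have key : ∀ a b : E', dprec (fun e : E' => time e.val)
      (fun (_ : Unit) (e : E') => ent pid e.val) a b →
      Relation.TransGen (dprec time ent) a.val b.val := by
    rintro a b ⟨_, id, hab, _⟩
    exact transGen_of_precIn time ent pid id _ a.val b.val le_rfl hab
  induction h with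
  | single h => exact key _ _ h
  | tail _ h ih => exact ih.trans (key _ _ h)
end

section
/- There exist a finite, time-complete, monotone multi-entity event log L whose set of entity types contains a designated type pid and at least one further entity type, a subset E' of its events each having a defined pid value, and events e1, e2 ∈ E' such that e1 < e2 holds in L, but in the pid-restriction L' of L to E' neither e1 <' e2 nor e2 <' e1 holds. Hence the converse of the order-preservation property of pid-restrictions fails. -/
/-- There exist a finite, time-complete, monotone multi-entity
event log whose entity types contain a designated `pid` and at least one further
entity type, a subset `E'` of events each with a defined `pid` value, and events
`e1, e2 ∈ E'` ordered `e1 < e2` in the full log but unordered (in either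
direction) in the pid-restriction to `E'`: the converse of the
order-preservation property of pid-restrictions fails. -/
theorem restriction_precedes_converse_fails :
    ∃ (E ET ID : Type) (_ : Fintype E) (_ : Fintype ET)
      (time : E → ℝ) (ent : ET → E → Option ID) (pid : ET),
      LogMonotone time ent ∧
      (∃ et : ET, et ≠ pid) ∧
      ∃ (E' : Set E), (∀ e ∈ E', (ent pid e).isSome) ∧
        ∃ e1 e2 : E',
          Relation.TransGen (dprec time ent) e1.val e2.val ∧
          ¬ Relation.TransGen
              (dprec (fun e : E' => time e.val)
                (fun (_ : Unit) (e : E') => ent pid e.val)) e1 e2 ∧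
          ¬ Relation.TransGen
              (dprec (fun e : E' => time e.val)
                (fun (_ : Unit) (e : E') => ent pid e.val)) e2 e1 := by
  have key : ∀ a b : (Set.univ : Set Bool),
      Relation.TransGen
        (dprec (fun e : (Set.univ : Set Bool) => (if e.val then (1 : ℝ) else 0))
          (fun (_ : Unit) (e : (Set.univ : Set Bool)) => some e.val)) a b → a.val = b.val := by
    intro a b h
    induction h with
    | single h =>
      obtain ⟨_, id, ⟨_, h1, h2⟩, _⟩ := h
      exact Option.some.inj (h1.trans h2.symm)
    | tail _ h ih =>
      obtain ⟨_, id, ⟨_, h1, h2⟩, _⟩ := h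
      exact ih.trans (Option.some.inj (h1.trans h2.symm))
  refine ⟨Bool, Bool, Bool, inferInstance, inferInstance,
    fun e => if e then (1 : ℝ) else 0,
    fun et e => if et then some e else some true, true, ?_, ⟨false, by decide⟩,
    Set.univ, ?_, ⟨false, trivial⟩, ⟨true, trivial⟩, ?_, ?_, ?_⟩
  · intro et id e1 e2 hne _ _
    cases e1 <;> cases e2 <;> simp_all
  · intro e _
    rfl
  · refine Relation.TransGen.single ⟨false, true, ⟨by norm_num, rfl, rfl⟩, ?_⟩
    rintro ⟨e, ⟨h1, _⟩, ⟨h2, _⟩⟩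
    cases e <;> simp at h1 h2
  · intro h
    exact absurd (key _ _ h) (by decide)
  · intro h
    exact absurd (key _ _ h) (by decide)
end

section
/- Consider a FIFO queue history q : ℕ → List α with q 0 = [] in which every step is an enqueue, a dequeue, or idle, and suppose every value of α is enqueued at most once over the whole history. If a value a is enqueued at step i, a value b is enqueued at step j with i < j, a is dequeued at step k, and b is dequeued at step m, then k < m: items leave a FIFO queue in the order in which they entered it (no item can overtake another). -/
/-- Value `a` is enqueued at step `n` of the queue history `q`. -/
def EnqAt {α : Type*} (q : ℕ → List α) (n : ℕ) (a : α) : Prop :=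
  q (n + 1) = q n ++ [a]

/-- Value `a` is dequeued at step `n` of the queue history `q`. -/
def DeqAt {α : Type*} (q : ℕ → List α) (n : ℕ) (a : α) : Prop :=
  q n = a :: q (n + 1)

/-- `q` is a FIFO queue history: it starts empty and every step is an
enqueue, a dequeue, or idle. -/
def IsFifoHistory {α : Type*} (q : ℕ → List α) : Prop :=
  q 0 = [] ∧ ∀ n : ℕ, (∃ a, EnqAt q n a) ∨ (∃ b, DeqAt q n b) ∨ q (n + 1) = q n

theorem fifo_mem {α : Type*} (q : ℕ → List α) (hq : IsFifoHistory q) (n : ℕ) :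
    ∀ x ∈ q n, ∃ s, s < n ∧ EnqAt q s x := by
  induction n with
  | zero => intro x hx; simp [hq.1] at hx
  | succ n ih =>
    intro x hx
    have up : x ∈ q n → ∃ s, s < n + 1 ∧ EnqAt q s x := fun h => by
      obtain ⟨s, h1, h2⟩ := ih x h
      exact ⟨s, by omega, h2⟩
    rcases hq.2 n with ⟨c, hc⟩ | ⟨c, hc⟩ | hc
    · have hc2 := hc
      unfold EnqAt at hc2
      rw [hc2, List.mem_append, List.mem_singleton] at hx
      rcases hx with hx | rfl
      · exact up hx
      · exact ⟨n, by omega, hc⟩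
    · unfold DeqAt at hc
      exact up (by rw [hc]; exact List.mem_cons_of_mem _ hx)
    · exact up (hc ▸ hx)

theorem fifo_pairwise {α : Type*} (q : ℕ → List α) (hq : IsFifoHistory q) (n : ℕ) :
    (q n).Pairwise (fun x y => ∃ s t, s < t ∧ EnqAt q s x ∧ EnqAt q t y) := by
  induction n with
  | zero => simp [hq.1]
  | succ n ih =>
    rcases hq.2 n with ⟨c, hc⟩ | ⟨c, hc⟩ | hc
    · have hc2 := hc
      unfold EnqAt at hc2
      rw [hc2, List.pairwise_append]
      refine ⟨ih, List.pairwise_singleton _ _, ?_⟩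
      intro x hx y hy
      rw [List.mem_singleton] at hy
      subst hy
      obtain ⟨s, h1, h2⟩ := fifo_mem q hq n x hx
      exact ⟨s, n, h1, h2, hc⟩
    · unfold DeqAt at hc
      rw [hc] at ih
      exact (List.pairwise_cons.1 ih).2
    · rw [hc]; exact ih

/-- In a FIFO queue history in which every value is enqueued at
most once, items leave the queue in the order in which they entered it:
if `a` is enqueued before `b`, then `a` is dequeued before `b`. -/
theorem fifo_no_overtaking {α : Type*} (q : ℕ → List α)
    (hq : IsFifoHistory q)
    (honce : ∀ (a : α) (n m : ℕ), EnqAt q n a → EnqAt q m a → n = m)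
    (a b : α) (i j k m : ℕ) (hij : i < j)
    (ha : EnqAt q i a) (hb : EnqAt q j b)
    (hka : DeqAt q k a) (hmb : DeqAt q m b) :
    k < m := by
  by_contra hkm
  have hkm : m ≤ k := by omega
  have hmb2 : q m = b :: q (m + 1) := hmb
  have hka2 : q k = a :: q (k + 1) := hka
  obtain ⟨s, hs, hsb⟩ := fifo_mem q hq m b (by rw [hmb2]; simp)
  have hsj := honce b s j hsb hb
  have back : ∀ d, a ∈ q (m + d) → a ∈ q m := by
    intro d
    induction d with
    | zero => exact id
    | succ d ih =>
      intro h
      apply ih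
      rw [← Nat.add_assoc] at h
      rcases hq.2 (m + d) with ⟨c, hc⟩ | ⟨c, hc⟩ | hc
      · have hc2 := hc
        unfold EnqAt at hc2
        rw [hc2, List.mem_append, List.mem_singleton] at h
        rcases h with h | rfl
        · exact h
        · have := honce _ _ _ hc ha
          omega
      · unfold DeqAt at hc
        rw [hc]; exact List.mem_cons_of_mem _ h
      · exact hc ▸ h
  have ham : a ∈ q m := back (k - m) (by
    rw [Nat.add_sub_cancel' hkm, hka2]; simp)
  have hp := fifo_pairwise q hq m
  rw [hmb2] at ham hp
  rcases List.mem_cons.1 ham with rfl | h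
  · have := honce _ _ _ ha hb
    omega
  · obtain ⟨s', t, hst, h1, h2⟩ := (List.pairwise_cons.1 hp).1 a h
    have e1 := honce _ _ _ h1 hb
    have e2 := honce _ _ _ h2 ha
    omega
end
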